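/- The function φ_NLS belongs to N_NLS (that is, ∫ |φ_NLS|² dx = 2α), its energy satisfies E_NLS(φ_NLS) = c_NLS, and every ψ ∈ N_NLS satisfies E_NLS(ψ) ≥ c_NLS. Consequently c_NLS = inf{ E_NLS(ψ) : ψ ∈ N_NLS } and the infimum is attained at φ_NLS. -/

import Mathlib

open MeasureTheory

noncomputable def sech (x : ℝ) : ℝ := 1 / Real.cosh x

/-- `H1PairC ψ ψ'` expresses that `ψ` belongs to `H¹(ℝ;ℂ)` with weak derivative `ψ'`:
`ψ` is continuous and square-integrable, `ψ'` is square-integrable, and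
`ψ b - ψ a = ∫ₐᵇ ψ'` for all `a ≤ b`. -/
def H1PairC (ψ ψ' : ℝ → ℂ) : Prop :=
  Continuous ψ ∧ Integrable (fun x => ‖ψ x‖ ^ 2) ∧ Integrable (fun x => ‖ψ' x‖ ^ 2) ∧
    ∀ a b : ℝ, a ≤ b → ψ b - ψ a = ∫ t in a..b, ψ' t

/-- The nonlinear Schrödinger energy `E_NLS(ψ) = ∫ ((g₂/8)|ψ'|² + (3/8)A|ψ|⁴) dx`. -/
noncomputable def ENLS (g₂ A : ℝ) (ψ ψ' : ℝ → ℂ) : ℝ :=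
  ∫ x : ℝ, (g₂ / 8 * ‖ψ' x‖ ^ 2 + (3 / 8) * A * ‖ψ x‖ ^ 4)

open Filter Topology Set

lemma ac_int_zero (G h : ℝ → ℝ) (hG : Integrable G) (hh : Integrable h)
    (hac : ∀ a b, AbsolutelyContinuousOnInterval G a b)
    (hd : ∀ᵐ x, HasDerivAt G (h x) x) : ∫ x, h x = 0 := by
  have key : ∀ a b, ∫ x in a..b, h x = G b - G a := by
    intro a b
    rw [← (hac a b).integral_deriv_eq_sub]
    apply intervalIntegral.integral_congr_ae
    filter_upwards [hd] with x hx _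
    exact hx.deriv.symm
  have t1 : Tendsto G atTop (𝓝 ((∫ x in Ioi 0, h x) + G 0)) := by
    have := (intervalIntegral_tendsto_integral_Ioi 0 hh.integrableOn tendsto_id).add_const (G 0)
    refine this.congr fun x => ?_
    simp [key]
  have t2 : Tendsto G atBot (𝓝 (G 0 - (∫ x in Iic 0, h x))) := by
    have := (intervalIntegral_tendsto_integral_Iic 0 hh.integrableOn tendsto_id).const_sub (G 0)
    refine this.congr fun x => ?_
    simp [key]
  have z1 := IntegrableAtFilter.eq_zero_of_tendsto (μ := volume) (hG.integrableAtFilter _) (by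
    intro s hs
    rcases mem_atTop_sets.1 hs with ⟨b, hb⟩
    rw [← top_le_iff, ← Real.volume_Ici (a := b)]
    exact measure_mono hb) t1
  have z2 := IntegrableAtFilter.eq_zero_of_tendsto (μ := volume) (hG.integrableAtFilter _) (by
    intro s hs
    rcases mem_atBot_sets.1 hs with ⟨b, hb⟩
    rw [← top_le_iff, ← Real.volume_Iic (a := b)]
    exact measure_mono hb) t2
  have := intervalIntegral.integral_Iic_add_Ioi (b := (0:ℝ)) hh.integrableOn hh.integrableOn
  linarith

lemma loc_int (ψ ψ' : ℝ → ℂ) (h : H1PairC ψ ψ') (hne : (∫ x : ℝ, ‖ψ x‖ ^ 2) ≠ 0) :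
    LocallyIntegrable ψ' := by
  by_contra hc
  apply hne
  simp only [LocallyIntegrable, not_forall] at hc
  obtain ⟨p, hp⟩ := hc
  obtain ⟨hcont, hi, -, hf⟩ := h
  have e : ∀ a b, a < p → p < b → ψ b = ψ a := by
    intro a b ha hb
    have := hf a b (by linarith)
    rw [intervalIntegral.integral_undef] at this
    · exact sub_eq_zero.1 this
    · intro H
      rw [intervalIntegrable_iff_integrableOn_Ioc_of_le (by linarith)] at H
      exact hp ⟨_, Ioc_mem_nhds ha hb, H⟩
  have e1 : ∀ a, a < p → ψ a = ψ (p+1) := fun a ha => (e a (p+1) ha (by linarith)).symm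
  have z : ‖ψ (p+1)‖ ^ 2 = 0 := by
    refine IntegrableAtFilter.eq_zero_of_tendsto (μ := volume) (l := atBot)
      (hi.integrableAtFilter _) (by
      intro s hs
      rcases mem_atBot_sets.1 hs with ⟨b, hb⟩
      rw [← top_le_iff, ← Real.volume_Iic (a := b)]
      exact measure_mono hb) ?_
    refine tendsto_const_nhds.congr' ?_
    filter_upwards [eventually_lt_atBot p] with a ha
    rw [e1 a ha]
  have : ∀ᵐ x, ‖ψ x‖ ^ 2 = 0 := by
    have : ∀ᵐ x : ℝ, x ≠ p := by
      simp [ae_iff]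
    filter_upwards [this] with x hx
    rcases lt_or_gt_of_ne hx with h | h
    · rw [e1 x h, z]
    · rw [e (p-1) x (by linarith) h, e1 (p-1) (by linarith), z]
  rw [integral_congr_ae this]; simp

lemma lower (κ α : ℝ) (ψ ψ' : ℝ → ℂ) (H : H1PairC ψ ψ') (hα : 0 < α)
    (hM : (∫ x : ℝ, ‖ψ x‖ ^ 2) = 2 * α) (h4 : Integrable (fun x => ‖ψ x‖ ^ 4)) :
    -(2 / 3 * κ ^ 2 * α ^ 3) ≤ ∫ x, (‖ψ' x‖ ^ 2 - κ * ‖ψ x‖ ^ 4) := by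
  have hloc := loc_int ψ ψ' H (by rw [hM]; positivity)
  obtain ⟨hcont, hi, hi', hf⟩ := H
  have hρc : Continuous (fun x => ‖ψ x‖ ^ 2) := by fun_prop
  have hII : ∀ a b, IntervalIntegrable ψ' volume a b := fun a b =>
    (hloc.integrableOn_isCompact isCompact_uIcc).intervalIntegrable
  have hf' : ∀ x, ψ x = ψ 0 + ∫ t in (0:ℝ)..x, ψ' t := by
    intro x
    rcases le_total 0 x with h | h
    · rw [← hf 0 x h]; ring
    · rw [intervalIntegral.integral_symm, ← hf x 0 h]; ring
  have hre : ∀ x, (ψ x).re = (ψ 0).re + ∫ t in (0:ℝ)..x, (ψ' t).re := by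
    intro x
    rw [hf' x, Complex.add_re]
    congr 1
    exact (Complex.reCLM.intervalIntegral_comp_comm (hII 0 x)).symm
  have him : ∀ x, (ψ x).im = (ψ 0).im + ∫ t in (0:ℝ)..x, (ψ' t).im := by
    intro x
    rw [hf' x, Complex.add_im]
    congr 1
    exact (Complex.imCLM.intervalIntegral_comp_comm (hII 0 x)).symm
  have hIre : ∀ a b, IntervalIntegrable (fun x => (ψ' x).re) volume a b := fun a b =>
    ⟨(hII a b).1.re, (hII a b).2.re⟩
  have hIim : ∀ a b, IntervalIntegrable (fun x => (ψ' x).im) volume a b := fun a b =>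
    ⟨(hII a b).1.im, (hII a b).2.im⟩
  have acgen : ∀ (f g : ℝ → ℝ), (∀ a b, IntervalIntegrable g volume a b) →
      (∀ x, f x = f 0 + ∫ t in (0:ℝ)..x, g t) → ∀ a b, AbsolutelyContinuousOnInterval f a b := by
    intro f g hg hfg a b
    have e : f = (fun _ => f a) + fun x => ∫ t in a..x, g t := by
      ext x
      have := intervalIntegral.integral_add_adjacent_intervals (hg 0 a) (hg a x)
      simp only [Pi.add_apply]
      rw [hfg x, hfg a, ← this]; ring
    rw [e]
    refine AbsolutelyContinuousOnInterval.add ?_ ?_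
    · exact contDiff_const.contDiffOn.absolutelyContinuousOnInterval
    · exact (hg a b).absolutelyContinuousOnInterval_intervalIntegral left_mem_uIcc
  set c : ℝ := (∫ x in Iic 0, ‖ψ x‖ ^ 2) - α with hc
  set F : ℝ → ℝ := fun x => c + ∫ t in (0:ℝ)..x, ‖ψ t‖ ^ 2 with hF
  have hFd : ∀ x, HasDerivAt F (‖ψ x‖ ^ 2) x := fun x =>
    (intervalIntegral.integral_hasDerivAt_right (hρc.intervalIntegrable _ _)
      hρc.stronglyMeasurable.stronglyMeasurableAtFilter hρc.continuousAt).const_add c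
  have hFc : Continuous F := continuous_iff_continuousAt.2 fun x => (hFd x).continuousAt
  have hacF := acgen F (fun x => ‖ψ x‖ ^ 2) (fun a b => hρc.intervalIntegrable _ _)
    (fun x => by simp [hF])
  have hacu := acgen (fun x => (ψ x).re) _ hIre hre
  have hacv := acgen (fun x => (ψ x).im) _ hIim him
  have hsum := intervalIntegral.integral_Iic_add_Ioi (b := (0:ℝ)) (μ := volume)
    (f := fun x => ‖ψ x‖ ^ 2) hi.integrableOn hi.integrableOn
  have hFtop : Tendsto F atTop (𝓝 α) := by
    have := (intervalIntegral_tendsto_integral_Ioi 0 hi.integrableOn tendsto_id).const_add c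
    have e : c + (∫ x in Ioi 0, ‖ψ x‖ ^ 2) = α := by rw [hc]; linarith
    rw [e] at this
    exact this
  have hFbot : Tendsto F atBot (𝓝 (-α)) := by
    have := (intervalIntegral_tendsto_integral_Iic 0 hi.integrableOn tendsto_id).const_sub c
    have e : c - (∫ x in Iic 0, ‖ψ x‖ ^ 2) = -α := by rw [hc]; ring
    rw [e] at this
    refine this.congr fun x => ?_
    simp only [hF, id]
    rw [intervalIntegral.integral_symm]; ring
  obtain ⟨B, hB⟩ : ∃ B, ∀ x, ‖F x‖ ≤ B := by
    refine ⟨|c| + 2 * α, fun x => ?_⟩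
    refine (norm_add_le _ _).trans (add_le_add le_rfl ?_)
    refine intervalIntegral.norm_integral_le_integral_norm_uIoc.trans ?_
    rw [← hM]
    simp only [norm_pow, norm_norm]
    exact setIntegral_le_integral hi (Eventually.of_forall fun x => by positivity)
  -- the pieces
  set r : ℝ → ℝ := fun x => (ψ x).re * (ψ' x).re + (ψ x).im * (ψ' x).im with hr
  have hn : ∀ z : ℂ, ‖z‖ ^ 2 = z.re ^ 2 + z.im ^ 2 := fun z => by
    rw [← Complex.normSq_eq_norm_sq, Complex.normSq_apply]; ring
  have hψ'm : AEStronglyMeasurable ψ' := hloc.aestronglyMeasurable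
  have hrm : AEStronglyMeasurable r := by
    refine AEStronglyMeasurable.add ?_ ?_
    · exact (Complex.continuous_re.comp hcont).aestronglyMeasurable.mul
        (Complex.continuous_re.comp_aestronglyMeasurable hψ'm)
    · exact (Complex.continuous_im.comp hcont).aestronglyMeasurable.mul
        (Complex.continuous_im.comp_aestronglyMeasurable hψ'm)
  have hri : Integrable r := by
    refine (hi.add hi').mono' hrm (Eventually.of_forall fun x => ?_)
    simp only [Pi.add_apply, hn, hr, Real.norm_eq_abs]
    rw [abs_le]
    constructor <;> nlinarith [sq_nonneg ((ψ x).re + (ψ' x).re), sq_nonneg ((ψ x).im + (ψ' x).im),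
      sq_nonneg ((ψ x).re - (ψ' x).re), sq_nonneg ((ψ x).im - (ψ' x).im),
      sq_nonneg ((ψ x).re), sq_nonneg ((ψ' x).re), sq_nonneg ((ψ x).im), sq_nonneg ((ψ' x).im)]
  have hFri : Integrable (fun x => F x * r x) :=
    hri.bdd_mul hFc.aestronglyMeasurable (Eventually.of_forall hB)
  have hFρi : Integrable (fun x => F x * ‖ψ x‖ ^ 2) :=
    hi.bdd_mul hFc.aestronglyMeasurable (Eventually.of_forall hB)
  have hFFρi : Integrable (fun x => F x * (F x * ‖ψ x‖ ^ 2)) :=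
    hFρi.bdd_mul hFc.aestronglyMeasurable (Eventually.of_forall hB)
  have hhi : Integrable (fun x => ‖ψ x‖ ^ 4 + 2 * (F x * r x)) := h4.add (hFri.const_mul 2)
  have hh0 : ∫ x, (‖ψ x‖ ^ 4 + 2 * (F x * r x)) = 0 := by
    refine ac_int_zero (fun x => F x * ‖ψ x‖ ^ 2) _ hFρi hhi ?_ ?_
    · intro a b
      have := (hacF a b).mul (((hacu a b).mul (hacu a b)).add ((hacv a b).mul (hacv a b)))
      convert this using 1
      ext x
      simp only [Pi.mul_apply, Pi.add_apply, hn]; ring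
    · filter_upwards [_root_.LocallyIntegrable.ae_hasDerivAt_integral hloc] with x hx
      have d : HasDerivAt ψ (ψ' x) x := by
        have := (hx 0).const_add (ψ 0)
        exact this.congr_of_eventuallyEq (Eventually.of_forall hf')
      have d1 : HasDerivAt (fun x => (ψ x).re) (ψ' x).re x :=
        Complex.reCLM.hasFDerivAt.comp_hasDerivAt x d
      have d2 : HasDerivAt (fun x => (ψ x).im) (ψ' x).im x :=
        Complex.imCLM.hasFDerivAt.comp_hasDerivAt x d
      have d3 := (hFd x).mul ((d1.pow 2).add (d2.pow 2))
      have e4 : ‖ψ x‖ ^ 4 = (‖ψ x‖ ^ 2) ^ 2 := by ring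
      rw [e4]
      simp only [hn, hr] at d3 ⊢
      refine HasDerivAt.congr_deriv d3 ?_
      simp
      ring
  have hcube : ∫ x, F x * (F x * ‖ψ x‖ ^ 2) = α ^ 3 / 3 - (-α) ^ 3 / 3 := by
    refine integral_of_hasDerivAt_of_tendsto (f := fun x => F x ^ 3 / 3) ?_ hFFρi
      ((hFbot.pow 3).div_const 3) ((hFtop.pow 3).div_const 3)
    intro x
    refine HasDerivAt.congr_deriv (((hFd x).pow 3).div_const 3) ?_
    simp
    ring
  have hE : Integrable (fun x => ‖ψ' x‖ ^ 2 - κ * ‖ψ x‖ ^ 4) := hi'.sub (h4.const_mul κ)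
  have hpos : 0 ≤ ∫ x, ((‖ψ' x‖ ^ 2 - κ * ‖ψ x‖ ^ 4) + (κ * (‖ψ x‖ ^ 4 + 2 * (F x * r x)) +
      κ ^ 2 * (F x * (F x * ‖ψ x‖ ^ 2)))) := by
    refine integral_nonneg fun x => ?_
    have : (‖ψ' x‖ ^ 2 - κ * ‖ψ x‖ ^ 4) + (κ * (‖ψ x‖ ^ 4 + 2 * (F x * r x)) +
      κ ^ 2 * (F x * (F x * ‖ψ x‖ ^ 2))) = ((ψ' x).re + κ * F x * (ψ x).re) ^ 2 +
        ((ψ' x).im + κ * F x * (ψ x).im) ^ 2 := by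
      have : (‖ψ' x‖ ^ 2 - κ * ‖ψ x‖ ^ 4) + (κ * (‖ψ x‖ ^ 4 + 2 * (F x * r x)) +
        κ ^ 2 * (F x * (F x * ‖ψ x‖ ^ 2))) = ‖ψ' x‖ ^ 2 + κ * (2 * (F x * r x)) +
        κ ^ 2 * (F x * (F x * ‖ψ x‖ ^ 2)) := by ring
      rw [this, hn, hn]
      simp only [hr]
      ring
    simp only [Pi.zero_apply]
    rw [this]
    positivity
  have hsum2 : Integrable (fun x => κ * (‖ψ x‖ ^ 4 + 2 * (F x * r x)) +
      κ ^ 2 * (F x * (F x * ‖ψ x‖ ^ 2))) := (hhi.const_mul κ).add (hFFρi.const_mul _)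
  rw [integral_add hE hsum2,
    integral_add (hhi.const_mul κ) (hFFρi.const_mul _), integral_const_mul, integral_const_mul,
    hh0, hcube] at hpos
  linarith

lemma hasDerivAt_tanh' (x : ℝ) : HasDerivAt Real.tanh (1 - Real.tanh x ^ 2) x := by
  have h := (Real.hasDerivAt_sinh x).div (Real.hasDerivAt_cosh x) (Real.cosh_pos x).ne'
  have e : Real.tanh = Real.sinh / Real.cosh := by
    ext y; simp [Real.tanh_eq_sinh_div_cosh]
  rw [e]
  refine h.congr_deriv ?_
  have := (Real.cosh_pos x).ne'
  simp only [Pi.div_apply]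
  field_simp

lemma tanh_top : Tendsto Real.tanh atTop (𝓝 1) := by
  have h : Tendsto (fun x : ℝ => Real.exp (-(2 * x))) atTop (𝓝 0) :=
    Real.tendsto_exp_neg_atTop_nhds_zero.comp (tendsto_id.const_mul_atTop (by norm_num))
  have : Tendsto (fun x : ℝ => (1 - Real.exp (-(2*x))) / (1 + Real.exp (-(2 * x)))) atTop
      (𝓝 ((1 - 0) / (1 + 0))) := (h.const_sub 1).div (h.const_add 1) (by norm_num)
  simp only [sub_zero, add_zero, div_one] at this
  refine this.congr fun x => ?_
  rw [Real.tanh_eq_sinh_div_cosh, Real.sinh_eq, Real.cosh_eq]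
  have e : Real.exp (-(2*x)) = Real.exp (-x) / Real.exp x := by
    rw [← Real.exp_sub]; ring_nf
  have := Real.exp_pos x
  have := Real.exp_pos (-x)
  rw [e]
  field_simp

lemma tanh_bot : Tendsto Real.tanh atBot (𝓝 (-1)) := by
  have := (tanh_top.comp tendsto_neg_atBot_atTop).neg
  refine this.congr fun x => ?_
  simp

lemma kink_int (β a b : ℝ) (hβ : 0 < β) :
    Integrable (fun x => (a * Real.tanh (β * x) ^ 2 + b) * (1 - Real.tanh (β * x) ^ 2)) ∧
    ∫ x, (a * Real.tanh (β * x) ^ 2 + b) * (1 - Real.tanh (β * x) ^ 2) = 2 / β * (a / 3 + b) := by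
  have d : ∀ x, HasDerivAt (fun x => Real.tanh (β * x)) (β * (1 - Real.tanh (β * x) ^ 2)) x := by
    intro x
    have := (hasDerivAt_tanh' (β * x)).comp x ((hasDerivAt_id x).const_mul β)
    exact this.congr_deriv (by ring)
  have tt : Tendsto (fun x => Real.tanh (β * x)) atTop (𝓝 1) :=
    tanh_top.comp (tendsto_id.const_mul_atTop hβ)
  have tb : Tendsto (fun x => Real.tanh (β * x)) atBot (𝓝 (-1)) :=
    tanh_bot.comp (tendsto_id.const_mul_atBot hβ)
  have hc : Continuous fun x => Real.tanh (β * x) :=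
    continuous_iff_continuousAt.2 fun x => (d x).continuousAt
  have pos : ∀ x, 0 ≤ β * (1 - Real.tanh (β * x) ^ 2) := fun x =>
    mul_nonneg hβ.le (by linarith [Real.tanh_sq_lt_one (β * x)])
  have i0 : Integrable fun x => β * (1 - Real.tanh (β * x) ^ 2) := by
    rw [← integrableOn_univ, ← Iic_union_Ioi (a := (0:ℝ))]
    refine IntegrableOn.union ?_ (integrableOn_Ioi_deriv_of_nonneg' (fun x _ => d x)
      (fun x _ => pos x) tt)
    have h := (integrableOn_Ioi_deriv_of_nonneg' (a := 0) (fun x _ => d x) (fun x _ => pos x) tt)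
    rw [← integrableOn_Ici_iff_integrableOn_Ioi] at h
    have h2 := IntegrableOn.comp_neg_Iic (c := (0:ℝ)) (by simpa using h)
    simpa using h2
  have i1 : Integrable fun x => 1 - Real.tanh (β * x) ^ 2 := by
    have := i0.const_mul β⁻¹
    refine this.congr (Eventually.of_forall fun x => ?_)
    field_simp
  have i2 : Integrable (fun x => (a * Real.tanh (β * x) ^ 2 + b) * (1 - Real.tanh (β * x) ^ 2)) := by
    refine i1.bdd_mul (c := |a| + |b|) (((hc.pow 2).const_mul a).add continuous_const).aestronglyMeasurable (Eventually.of_forall fun x => ?_)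
    refine (norm_add_le _ _).trans ?_
    rw [norm_mul, Real.norm_eq_abs, Real.norm_eq_abs b, norm_pow, Real.norm_eq_abs, sq_abs]
    nlinarith [Real.tanh_sq_lt_one (β * x), abs_nonneg a]
  refine ⟨i2, ?_⟩
  have := integral_of_hasDerivAt_of_tendsto
    (f := fun x => β⁻¹ * (a / 3 * Real.tanh (β * x) ^ 3 + b * Real.tanh (β * x)))
    (fun x => ?_) i2 (((tb.pow 3).const_mul (a/3)).add (tb.const_mul b) |>.const_mul β⁻¹)
    (((tt.pow 3).const_mul (a/3)).add (tt.const_mul b) |>.const_mul β⁻¹)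
  · rw [this]; field_simp; ring
  · have := ((((d x).pow 3).const_mul (a/3)).add ((d x).const_mul b)).const_mul β⁻¹
    refine this.congr_deriv ?_
    simp
    field_simp

lemma sech_sq' (x : ℝ) : sech x ^ 2 = 1 - Real.tanh x ^ 2 := by
  have := (Real.cosh_pos x).ne'
  rw [sech, Real.tanh_eq_sinh_div_cosh]
  field_simp
  have := Real.cosh_sq x
  linarith

lemma hasDerivAt_sech' (x : ℝ) : HasDerivAt sech (-(Real.tanh x * sech x)) x := by
  have h0 := (Real.cosh_pos x).ne'
  have h := (hasDerivAt_const x (1:ℝ)).div (Real.hasDerivAt_cosh x) h0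
  refine HasDerivAt.congr_deriv (f := sech) h ?_
  rw [sech, Real.tanh_eq_sinh_div_cosh]
  field_simp
  ring

theorem stmt5 (g₂ A α : ℝ) (hg₂ : 0 < g₂) (hA : A < 0) (hα : 0 < α)
    (cN : ℝ) (hcN : cN = -3 * α ^ 3 * A ^ 2 / (4 * g₂))
    (ψK : ℝ → ℂ)
    (hψK : ∀ x : ℝ,
      ψK x = ((α * Real.sqrt (-3 * A / g₂) * sech (-3 * α * A * x / g₂) : ℝ) : ℂ)) :
    H1PairC ψK (deriv ψK) ∧ (∫ x : ℝ, ‖ψK x‖ ^ 2) = 2 * α ∧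
      ENLS g₂ A ψK (deriv ψK) = cN ∧
      ∀ ψ ψ' : ℝ → ℂ, H1PairC ψ ψ' → (∫ x : ℝ, ‖ψ x‖ ^ 2) = 2 * α →
        cN ≤ ENLS g₂ A ψ ψ' := by
  obtain ⟨κ, hκ⟩ : ∃ κ, κ = -3 * A / g₂ := ⟨_, rfl⟩
  have hκ0 : 0 < κ := by rw [hκ]; apply div_pos <;> linarith
  have hA' : A = -(κ * g₂ / 3) := by rw [hκ]; field_simp
  have hβ : 0 < κ * α := by positivity
  have hs : Real.sqrt κ ^ 2 = κ := Real.sq_sqrt hκ0.le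
  have hψ : ∀ x, ψK x = ((α * Real.sqrt κ * sech (κ * α * x) : ℝ) : ℂ) := by
    intro x
    rw [hψK x, hκ]
    congr 4
    ring
  have hd : ∀ x, HasDerivAt ψK
      ((-(α * Real.sqrt κ * (κ * α) * (Real.tanh (κ * α * x) * sech (κ * α * x))) : ℝ) : ℂ) x := by
    intro x
    have h1 : HasDerivAt (fun x => α * Real.sqrt κ * sech (κ * α * x))
        (-(α * Real.sqrt κ * (κ * α) * (Real.tanh (κ * α * x) * sech (κ * α * x)))) x := by
      have := ((hasDerivAt_sech' (κ * α * x)).comp x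
        ((hasDerivAt_id x).const_mul (κ * α))).const_mul (α * Real.sqrt κ)
      exact this.congr_deriv (by ring)
    have h2 := h1.ofReal_comp
    exact h2.congr_of_eventuallyEq (Eventually.of_forall hψ)
  have hderiv : ∀ x, deriv ψK x = _ := fun x => (hd x).deriv
  have htc : Continuous Real.tanh :=
    continuous_iff_continuousAt.2 fun x => (hasDerivAt_tanh' x).continuousAt
  have hsc : Continuous sech :=
    continuous_iff_continuousAt.2 fun x => (hasDerivAt_sech' x).continuousAt
  have hcd : Continuous (deriv ψK) := by
    rw [funext hderiv]
    fun_prop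
  have n1 : ∀ x, ‖ψK x‖ ^ 2 = (0 * Real.tanh (κ * α * x) ^ 2 + α ^ 2 * κ) *
      (1 - Real.tanh (κ * α * x) ^ 2) := by
    intro x
    rw [hψ x, Complex.norm_real, Real.norm_eq_abs, sq_abs, ← sech_sq', mul_pow, mul_pow, hs]
    ring
  have n2 : ∀ x, ‖deriv ψK x‖ ^ 2 =
      ((α ^ 2 * κ * (κ * α) ^ 2) * Real.tanh (κ * α * x) ^ 2 + 0) *
      (1 - Real.tanh (κ * α * x) ^ 2) := by
    intro x
    rw [hderiv x, Complex.norm_real, Real.norm_eq_abs, sq_abs, ← sech_sq', neg_sq, mul_pow, mul_pow,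
      mul_pow α, hs]
    ring
  have hH : H1PairC ψK (deriv ψK) := by
    refine ⟨continuous_iff_continuousAt.2 fun x => (hd x).continuousAt, ?_, ?_, ?_⟩
    · rw [funext n1]; exact (kink_int _ _ _ hβ).1
    · rw [funext n2]; exact (kink_int _ _ _ hβ).1
    · intro a b _
      rw [intervalIntegral.integral_eq_sub_of_hasDerivAt
        (fun x _ => (hd x).differentiableAt.hasDerivAt) (hcd.intervalIntegrable _ _)]
  refine ⟨hH, ?_, ?_, ?_⟩
  · rw [funext n1, (kink_int _ _ _ hβ).2]
    field_simp
    ring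
  · have n3 : ∀ x, g₂ / 8 * ‖deriv ψK x‖ ^ 2 + (3 / 8) * A * ‖ψK x‖ ^ 4 =
        ((g₂ / 8 * (α ^ 2 * κ * (κ * α) ^ 2) - 3 / 8 * A * (α ^ 2 * κ) ^ 2) *
          Real.tanh (κ * α * x) ^ 2 + 3 / 8 * A * (α ^ 2 * κ) ^ 2) *
        (1 - Real.tanh (κ * α * x) ^ 2) := by
      intro x
      have e : ‖ψK x‖ ^ 4 = (‖ψK x‖ ^ 2) ^ 2 := by ring
      rw [e, n1, n2]
      ring
    rw [ENLS, funext n3, (kink_int _ _ _ hβ).2, hcN, hA']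
    field_simp
    ring
  · intro ψ ψ' H hM
    have e : ∀ x, g₂ / 8 * ‖ψ' x‖ ^ 2 + (3 / 8) * A * ‖ψ x‖ ^ 4 =
        g₂ / 8 * (‖ψ' x‖ ^ 2 - κ * ‖ψ x‖ ^ 4) := by
      intro x; rw [hA']; ring
    have hcN' : cN = g₂ / 8 * (-(2 / 3 * κ ^ 2 * α ^ 3)) := by
      rw [hcN, hA']; field_simp; ring
    rw [ENLS, funext e, integral_const_mul, hcN']
    refine mul_le_mul_of_nonneg_left ?_ (by positivity)
    by_cases h4 : Integrable (fun x => ‖ψ x‖ ^ 4)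
    · exact lower κ α ψ ψ' H hα hM h4
    · rw [integral_undef]
      · have : 0 ≤ 2 / 3 * κ ^ 2 * α ^ 3 := by positivity
        linarith
      · intro hI
        apply h4
        have := (H.2.2.1.sub hI).const_mul κ⁻¹
        refine this.congr (Eventually.of_forall fun x => ?_)
        simp only [Pi.sub_apply]
        field_simp
        ring
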